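/- Let D be an ADF and let v be any interpretation of D. Then there exists a strongly admissible interpretation w of D with w ≤_i v such that every strongly admissible interpretation w' of D with w' ≤_i v satisfies w' ≤_i w; moreover this greatest strongly admissible interpretation below v is unique. -/

import Mathlib

/-!
Strong justification is monotone in the information order: if `w' ≤_i w`, a derivation of
`SJrel` for `w'` is also one for `w`, since decided values persist and every completion of
`w|_P` completes `w'|_P` (`SJrel.mono`). The strongly admissible interpretations below `v` never
disagree on an argument they both decide, because there they both agree with `v`. Their pointwise
union `maxBelow D v` is therefore well defined, and by monotonicity it is again strongly
admissible; it is the greatest one below `v`. Uniqueness is antisymmetry of the information order.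
-/

/-- Three truth values: true, false, undecided. -/
inductive TV : Type
  | t | f | u
deriving DecidableEq, Repr

/-- The information order on truth values: u <_i t and u <_i f. -/
def TV.ile (x y : TV) : Prop := x = TV.u ∨ x = y

/-- The information order on interpretations, extended pointwise. -/
def ILE {A : Type*} (v w : A → TV) : Prop := ∀ a, TV.ile (v a) (w a)

/-- An abstract dialectical framework on a set of arguments `A`:
each argument `a` has an acceptance condition `C a : (A → Bool) → Bool`. -/
structure ADF (A : Type*) where
  C : A → (A → Bool) → Bool

/-- The trivial interpretation mapping every argument to undecided. -/
def trivialInterp (A : Type*) : A → TV := fun _ => TV.u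

/-- The parents of `a` are the arguments on which its acceptance condition depends. -/
def ADF.parents {A : Type*} [DecidableEq A] (D : ADF A) (a : A) : Set A :=
  {b | ∃ w : A → Bool, D.C a w ≠ D.C a (Function.update w b (!w b))}

/-- A two-valued assignment `w` completes a three-valued interpretation `v`. -/
def Completes {A : Type*} (w : A → Bool) (v : A → TV) : Prop :=
  ∀ b, (v b = TV.t → w b = true) ∧ (v b = TV.f → w b = false)

/-- `φ` is irrefutable under `v`: every completion of `v` makes `φ` true. -/
def Irrefutable {A : Type*} (φ : (A → Bool) → Bool) (v : A → TV) : Prop :=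
  ∀ w : A → Bool, Completes w v → φ w = true

/-- `φ` is unsatisfiable under `v`: every completion of `v` makes `φ` false. -/
def Unsat {A : Type*} (φ : (A → Bool) → Bool) (v : A → TV) : Prop :=
  ∀ w : A → Bool, Completes w v → φ w = false

open Classical in
/-- The characteristic operator Γ_D of an ADF. -/
noncomputable def Gamma {A : Type*} (D : ADF A) (v : A → TV) : A → TV := fun a =>
  if Irrefutable (D.C a) v then TV.t
  else if Unsat (D.C a) v then TV.f
  else TV.u

open Classical in
/-- `v|_P`: agrees with `v` on `P` and is undecided elsewhere. -/
noncomputable def restrictTV {A : Type*} (v : A → TV) (P : Set A) : A → TV :=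
  fun b => if b ∈ P then v b else TV.u

/-- Strong acceptability/deniability of an argument with respect to interpretation `v`
and set `S`, relative to an excluded set `E` (the first index). An argument `a` with
`v a = t` (resp. `v a = f`) is strongly acceptable (resp. strongly deniable) iff there is
`P ⊆ (parents a ∩ S) \ E` with `φ_a^{v|_P}` irrefutable (resp. unsatisfiable) and every
`p ∈ P` strongly acceptable/deniable relative to `E ∪ {p}`. -/
inductive SJrel {A : Type*} [DecidableEq A] (D : ADF A) (v : A → TV) (S : Set A) :
    Set A → A → Prop
  | acc (E : Set A) (a : A) (P : Set A)
      (ha : v a = TV.t)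
      (hP : P ⊆ (D.parents a ∩ S) \ E)
      (hirr : Irrefutable (D.C a) (restrictTV v P))
      (hrec : ∀ p ∈ P, SJrel D v S (E ∪ {p}) p) : SJrel D v S E a
  | den (E : Set A) (a : A) (P : Set A)
      (ha : v a = TV.f)
      (hP : P ⊆ (D.parents a ∩ S) \ E)
      (hunsat : Unsat (D.C a) (restrictTV v P))
      (hrec : ∀ p ∈ P, SJrel D v S (E ∪ {p}) p) : SJrel D v S E a

/-- `a` is strongly acceptable/deniable w.r.t. `v` and `S`
(i.e., relative to the excluded set `{a}`). -/
def StronglyJustified {A : Type*} [DecidableEq A] (D : ADF A) (v : A → TV)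
    (S : Set A) (a : A) : Prop :=
  SJrel D v S {a} a

/-- `S` is a least set for `a` with respect to `v`. -/
def LeastSet {A : Type*} [DecidableEq A] (D : ADF A) (v : A → TV)
    (a : A) (S : Set A) : Prop :=
  StronglyJustified D v S a ∧
  ∀ S' : Set A, S'.ncard < S.ncard → ¬ StronglyJustified D v S' a

/-- An interpretation is strongly admissible iff every argument assigned `t`/`f`
is strongly acceptable/deniable w.r.t. `v` and some set `S`. -/
def StronglyAdmissible {A : Type*} [DecidableEq A] (D : ADF A) (v : A → TV) : Prop :=
  ∀ a : A, v a ≠ TV.u → ∃ S : Set A, StronglyJustified D v S a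

/-- `g` is the grounded interpretation of `D`: the least fixed point of `Γ_D`. -/
def IsGrounded {A : Type*} (D : ADF A) (g : A → TV) : Prop :=
  Gamma D g = g ∧ ∀ w : A → TV, Gamma D w = w → ILE g w

/-- An interpretation is admissible iff `v ≤_i Γ_D(v)`. -/
def Admissible {A : Type*} (D : ADF A) (v : A → TV) : Prop :=
  ILE v (Gamma D v)

/-- An interpretation is conflict-free. -/
def ConflictFree {A : Type*} (D : ADF A) (v : A → TV) : Prop :=
  ∀ a : A, (v a = TV.t → ∃ w : A → Bool, Completes w v ∧ D.C a w = true) ∧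
           (v a = TV.f → Unsat (D.C a) v)

/-- The join of two interpretations: take `v`'s value where defined, else `w`'s. -/
def joinI {A : Type*} (v w : A → TV) : A → TV :=
  fun a => if v a = TV.u then w a else v a

theorem ILE.antisymm {A : Type*} {v w : A → TV} (h : ILE v w) (h' : ILE w v) : v = w := by
  funext a
  rcases h a with h1 | h1
  · rcases h' a with h2 | h2
    · rw [h1, h2]
    · exact h2.symm
  · exact h1

theorem ILE.eq_of_eq {A : Type*} {v w : A → TV} (h : ILE v w) {a : A} {x : TV}
    (hx : x ≠ TV.u) (ha : v a = x) : w a = x := by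
  rcases h a with h1 | h1
  · exact absurd (ha.symm.trans h1) hx
  · exact h1.symm.trans ha

theorem Completes.restrict_anti {A : Type*} {v w : A → TV} (h : ILE v w) {P : Set A}
    {c : A → Bool} (hc : Completes c (restrictTV w P)) : Completes c (restrictTV v P) := by
  intro b
  have hb := hc b
  by_cases hP : b ∈ P
  · simp only [restrictTV, hP, if_true] at hb ⊢
    exact ⟨fun e => hb.1 (h.eq_of_eq (by simp) e), fun e => hb.2 (h.eq_of_eq (by simp) e)⟩
  · simp [restrictTV, hP]

theorem SJrel.mono {A : Type*} [DecidableEq A] {D : ADF A} {v w : A → TV} (h : ILE v w)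
    {S E : Set A} {a : A} (hj : SJrel D v S E a) : SJrel D w S E a := by
  induction hj with
  | acc E a P ha hP hirr _ ih =>
    exact .acc E a P (h.eq_of_eq (by simp) ha) hP (fun c hc => hirr c (hc.restrict_anti h)) ih
  | den E a P ha hP hun _ ih =>
    exact .den E a P (h.eq_of_eq (by simp) ha) hP (fun c hc => hun c (hc.restrict_anti h)) ih

open Classical in
/-- The union of all strongly admissible interpretations below `v`: it keeps the value `v a`
exactly when some strongly admissible `w ≤_i v` decides `a`. -/
noncomputable def maxBelow {A : Type*} [DecidableEq A] (D : ADF A) (v : A → TV) : A → TV :=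
  fun a => if ∃ w : A → TV, StronglyAdmissible D w ∧ ILE w v ∧ w a ≠ TV.u then v a else TV.u

theorem maxBelow_ile {A : Type*} [DecidableEq A] (D : ADF A) (v : A → TV) :
    ILE (maxBelow D v) v := by
  intro a
  unfold maxBelow
  split_ifs
  · exact Or.inr rfl
  · exact Or.inl rfl

theorem ile_maxBelow {A : Type*} [DecidableEq A] {D : ADF A} {v w : A → TV}
    (hw : StronglyAdmissible D w) (hv : ILE w v) : ILE w (maxBelow D v) := by
  intro a
  by_cases ha : w a = TV.u
  · exact Or.inl ha
  · right
    have hex : ∃ w : A → TV, StronglyAdmissible D w ∧ ILE w v ∧ w a ≠ TV.u := ⟨w, hw, hv, ha⟩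
    rw [maxBelow, if_pos hex]
    exact (hv a).resolve_left ha

theorem stronglyAdmissible_maxBelow {A : Type*} [DecidableEq A] (D : ADF A) (v : A → TV) :
    StronglyAdmissible D (maxBelow D v) := by
  intro a ha
  by_cases hex : ∃ w : A → TV, StronglyAdmissible D w ∧ ILE w v ∧ w a ≠ TV.u
  · obtain ⟨w, hw, hv, hwa⟩ := hex
    obtain ⟨S, hS⟩ := hw a hwa
    exact ⟨S, SJrel.mono (ile_maxBelow hw hv) hS⟩
  · exact absurd (by rw [maxBelow, if_neg hex]) ha

/-- Below any interpretation `v` there is a unique greatest strongly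
admissible interpretation. -/
theorem exists_unique_max_strongly_admissible_below {A : Type*} [Fintype A]
    [DecidableEq A] (D : ADF A) (v : A → TV) :
    ∃! w : A → TV, StronglyAdmissible D w ∧ ILE w v ∧
      ∀ w' : A → TV, StronglyAdmissible D w' → ILE w' v → ILE w' w := by
  refine ⟨maxBelow D v, ⟨stronglyAdmissible_maxBelow D v, maxBelow_ile D v,
    fun _ hw hv => ile_maxBelow hw hv⟩, ?_⟩
  rintro w ⟨hw, hv, hmax⟩
  exact (ile_maxBelow hw hv).antisymm
    (hmax _ (stronglyAdmissible_maxBelow D v) (maxBelow_ile D v))
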